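/- For every E > 0, the outgoing and incoming tails Γ_-(E) and Γ_+(E) are closed subsets of ℝⁿ × ℝⁿ. -/

import Mathlib

open Filter Set
open scoped Topology RealInnerProductSpace

noncomputable section

/-- The phase space `ℝⁿ × ℝⁿ`. -/
abbrev Phase (n : ℕ) : Type := EuclideanSpace ℝ (Fin n) × EuclideanSpace ℝ (Fin n)

/-- The classical Hamiltonian `p(x, ξ) = ‖ξ‖² + V(x)`. -/
def ham {n : ℕ} (V : EuclideanSpace ℝ (Fin n) → ℝ) (ρ : Phase n) : ℝ :=
  ‖ρ.2‖ ^ 2 + V ρ.1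

/-- The Hamiltonian vector field `H_p(x, ξ) = (2ξ, -∇V(x))`. -/
def hamVF {n : ℕ} (V : EuclideanSpace ℝ (Fin n) → ℝ) (ρ : Phase n) : Phase n :=
  ((2 : ℝ) • ρ.2, -gradient V ρ.1)

/-- `Φ` is the (complete) flow of the Hamiltonian vector field `H_p`:
it starts at the identity, satisfies the group law, and each curve
`t ↦ Φ t ρ` is an integral curve of `H_p`. -/
def IsHamFlow {n : ℕ} (V : EuclideanSpace ℝ (Fin n) → ℝ)
    (Φ : ℝ → Phase n → Phase n) : Prop :=
  (∀ ρ, Φ 0 ρ = ρ) ∧ (∀ s t ρ, Φ (s + t) ρ = Φ s (Φ t ρ)) ∧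
    ∀ ρ t, HasDerivAt (fun s => Φ s ρ) (hamVF V (Φ t ρ)) t

/-- The outgoing tail `Γ₋(E)`: points of the energy surface whose forward
trajectory does not escape to infinity. -/
def GammaMinus {n : ℕ} (V : EuclideanSpace ℝ (Fin n) → ℝ)
    (Φ : ℝ → Phase n → Phase n) (E : ℝ) : Set (Phase n) :=
  {ρ | ham V ρ = E ∧ ¬ Tendsto (fun t => ‖Φ t ρ‖) atTop atTop}

/-- The incoming tail `Γ₊(E)`: points of the energy surface whose backward
trajectory does not escape to infinity. -/
def GammaPlus {n : ℕ} (V : EuclideanSpace ℝ (Fin n) → ℝ)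
    (Φ : ℝ → Phase n → Phase n) (E : ℝ) : Set (Phase n) :=
  {ρ | ham V ρ = E ∧ ¬ Tendsto (fun t => ‖Φ t ρ‖) atBot atTop}

/-- The trapped set `K(E) = Γ₋(E) ∩ Γ₊(E)`. -/
def trappedSet {n : ℕ} (V : EuclideanSpace ℝ (Fin n) → ℝ)
    (Φ : ℝ → Phase n → Phase n) (E : ℝ) : Set (Phase n) :=
  GammaMinus V Φ E ∩ GammaPlus V Φ E

/-!
A trajectory escapes to infinity in forward time exactly when at some time `t ≥ 0` it lies beyond
the support of `∇V` and moves away from the origin. Indeed, such a particle moves on a straight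
line from then on and never comes back. Conversely, conservation of energy bounds the momentum, so
along an escaping trajectory the position tends to infinity, and `‖x‖²`, whose derivative is
`4⟪x, ξ⟫`, cannot be eventually nonincreasing. This condition is open in the initial point because
the flow depends continuously on it, so `Γ₋(E)` is closed. Reversing time and momentum maps `Γ₊(E)`
to the set `Γ₋(E)` of the reversed flow.
-/

section NormedSpace

variable {F G : Type*} [NormedAddCommGroup F] [NormedAddCommGroup G]

theorem tendsto_norm_fst_of_norm_snd_le {α : Type*} {l : Filter α} {f : α → F × G} {C : ℝ}
    (hf : Tendsto (fun a => ‖f a‖) l atTop) (hC : ∀ a, ‖(f a).2‖ ≤ C) :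
    Tendsto (fun a => ‖(f a).1‖) l atTop := by
  refine tendsto_atTop_mono (fun a => ?_) (tendsto_atTop_add_const_right l (-C) hf)
  rw [← sub_eq_add_neg, sub_le_iff_le_add]
  calc ‖f a‖ ≤ ‖(f a).1‖ + ‖(f a).2‖ :=
        max_le_add_of_nonneg (norm_nonneg _) (norm_nonneg _)
    _ ≤ ‖(f a).1‖ + C := by gcongr; exact hC a

variable [NormedSpace ℝ F]

theorem tendsto_norm_add_smul_atTop (x : F) {v : F} (hv : v ≠ 0) :
    Tendsto (fun t : ℝ => ‖x + t • v‖) atTop atTop := by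
  have linear_growth : Tendsto (fun t : ℝ => t * ‖v‖ - ‖x‖) atTop atTop :=
    tendsto_atTop_add_const_right _ _ (tendsto_id.atTop_mul_const (norm_pos_iff.2 hv))
  refine tendsto_atTop_mono (fun t => ?_) linear_growth
  calc t * ‖v‖ - ‖x‖ ≤ ‖t • v‖ - ‖x‖ := by
        rw [norm_smul]
        gcongr
        exact Real.le_norm_self t
    _ ≤ ‖x + t • v‖ := by
        simpa only [norm_neg, sub_neg_eq_add, add_comm] using norm_sub_norm_le (t • v) (-x)

theorem continuous_flow_of_lipschitzWith {v : F → F} {K : NNReal} (hv : LipschitzWith K v)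
    {Φ : ℝ → F → F} (hΦ_zero : ∀ x, Φ 0 x = x)
    (hΦ : ∀ x t, HasDerivAt (fun s => Φ s x) (v (Φ t x)) t) {t : ℝ} (ht : 0 ≤ t) :
    Continuous (Φ t) := by
  have continuousOn_trajectory (x : F) : ContinuousOn (fun s => Φ s x) (Icc 0 t) :=
    HasDerivAt.continuousOn fun s _ => hΦ x s
  refine LipschitzWith.continuous (K := (Real.exp (K * t)).toNNReal)
    (LipschitzWith.of_dist_le_mul fun x y => ?_)
  have gronwall : dist (Φ t x) (Φ t y) ≤ dist (Φ 0 x) (Φ 0 y) * Real.exp (K * (t - 0)) :=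
    dist_le_of_trajectories_ODE (v := fun _ => v) (fun _ => hv)
      (continuousOn_trajectory x) (fun s _ => (hΦ x s).hasDerivWithinAt)
      (continuousOn_trajectory y) (fun s _ => (hΦ y s).hasDerivWithinAt)
      le_rfl t (right_mem_Icc.2 ht)
  rwa [hΦ_zero, hΦ_zero, sub_zero, mul_comm, ← Real.coe_toNNReal _ (Real.exp_nonneg _)] at gronwall

end NormedSpace

section InnerProductSpace

variable {F : Type*} [NormedAddCommGroup F] [InnerProductSpace ℝ F]

theorem norm_le_norm_add_of_inner_nonneg {x y : F} (h : 0 ≤ ⟪x, y⟫) : ‖x‖ ≤ ‖x + y‖ := by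
  refine le_of_sq_le_sq ?_ (norm_nonneg _)
  rw [norm_add_sq_real]
  linarith [sq_nonneg ‖y‖]

theorem frequently_inner_deriv_pos {x x' : ℝ → F} (hx : ∀ t, HasDerivAt x (x' t) t)
    (hx_atTop : Tendsto (fun t => ‖x t‖) atTop atTop) :
    ∃ᶠ t in atTop, 0 < ⟪x t, x' t⟫ := by
  intro eventually_not_pos
  obtain ⟨T, hT⟩ := eventually_atTop.1 eventually_not_pos
  have hasDerivAt_normSq (t : ℝ) : HasDerivAt (fun s => ‖x s‖ ^ 2) (2 * ⟪x t, x' t⟫) t :=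
    (hx t).norm_sq
  have antitoneOn_normSq : AntitoneOn (fun t => ‖x t‖ ^ 2) (Ici T) :=
    antitoneOn_of_hasDerivWithinAt_nonpos (convex_Ici T)
      (HasDerivAt.continuousOn fun t _ => hasDerivAt_normSq t)
      (fun t _ => (hasDerivAt_normSq t).hasDerivWithinAt)
      fun t ht => by linarith [hT t (interior_subset ht)]
  obtain ⟨t, norm_lt, hTt⟩ :=
    ((hx_atTop.eventually_gt_atTop ‖x T‖).and (eventually_ge_atTop T)).exists
  exact norm_lt.not_ge
    (le_of_sq_le_sq (antitoneOn_normSq self_mem_Ici hTt hTt) (norm_nonneg _))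

variable [CompleteSpace F] {V : F → ℝ}

theorem exists_gradient_eq_zero_of_lt_norm (hV : HasCompactSupport V) :
    ∃ R : ℝ, ∀ x, R < ‖x‖ → gradient V x = 0 := by
  obtain ⟨R, hR⟩ := hV.isBounded.subset_closedBall 0
  refine ⟨R, fun x hx => ?_⟩
  have hx_notMem : x ∉ tsupport V := fun hx_mem =>
    hx.not_ge (mem_closedBall_zero_iff.1 (hR hx_mem))
  have hfderiv : fderiv ℝ V x = 0 :=
    Function.notMem_support.1 fun h => hx_notMem (support_fderiv_subset ℝ h)
  rw [gradient, hfderiv, map_zero]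

theorem exists_lipschitzWith_gradient (hV : ContDiff ℝ 2 V) (hVsupp : HasCompactSupport V) :
    ∃ K, LipschitzWith K (gradient V) := by
  obtain ⟨K, hK⟩ := ContDiff.lipschitzWith_of_hasCompactSupport (hVsupp.fderiv ℝ)
    (hV.fderiv_right one_add_one_eq_two.le) one_ne_zero
  exact ⟨_, (InnerProductSpace.toDual ℝ F).symm.lipschitz.comp hK⟩

end InnerProductSpace

section PhaseSpace

variable {n : ℕ} {V : EuclideanSpace ℝ (Fin n) → ℝ}

theorem continuous_ham (hV : Continuous V) : Continuous (ham V) := by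
  unfold ham
  fun_prop

theorem lipschitzWith_hamVF {K : NNReal} (hV : LipschitzWith K (gradient V)) :
    LipschitzWith (max 2 K) (hamVF V) := by
  have lipschitz_fst : LipschitzWith 1 (Prod.fst : Phase n → _) := LipschitzWith.prod_fst
  have lipschitz_snd : LipschitzWith 1 (Prod.snd : Phase n → _) := LipschitzWith.prod_snd
  have lipschitz_velocity : LipschitzWith 2 fun ρ : Phase n => (2 : ℝ) • ρ.2 := by
    simpa [Function.comp_def] using (lipschitzWith_smul (2 : ℝ)).comp lipschitz_snd
  have lipschitz_force : LipschitzWith K fun ρ : Phase n => -gradient V ρ.1 := by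
    simpa only [mul_one] using! (hV.comp lipschitz_fst).neg
  exact lipschitz_velocity.prodMk lipschitz_force

theorem norm_snd_le_sqrt_ham_sub {m : ℝ} {ρ : Phase n} (hm : m ≤ V ρ.1) :
    ‖ρ.2‖ ≤ √(ham V ρ - m) :=
  Real.le_sqrt_of_sq_le (by rw [ham]; linarith)

/-- The outgoing region beyond radius `R`: points at distance more than `R` from the origin whose
momentum points strictly away from it. It serves as an open witness of escape to infinity. -/
def outgoingRegion (n : ℕ) (R : ℝ) : Set (Phase n) :=
  {ρ | R < ‖ρ.1‖ ∧ 0 < ⟪ρ.1, ρ.2⟫}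

theorem isOpen_outgoingRegion (R : ℝ) : IsOpen (outgoingRegion n R) :=
  (isOpen_lt continuous_const continuous_fst.norm).and
    (isOpen_lt continuous_const (continuous_fst.inner continuous_snd))

/-- Momentum reversal `(x, ξ) ↦ (x, -ξ)`, the involution that exchanges the two time directions. -/
def reverseMomentum (ρ : Phase n) : Phase n := (ρ.1, -ρ.2)

theorem continuous_reverseMomentum : Continuous (reverseMomentum (n := n)) := by
  unfold reverseMomentum
  fun_prop

@[simp]
theorem reverseMomentum_reverseMomentum (ρ : Phase n) :
    reverseMomentum (reverseMomentum ρ) = ρ := by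
  simp [reverseMomentum]

@[simp]
theorem norm_reverseMomentum (ρ : Phase n) : ‖reverseMomentum ρ‖ = ‖ρ‖ := by
  simp [reverseMomentum, Prod.norm_def]

@[simp]
theorem ham_reverseMomentum (ρ : Phase n) : ham V (reverseMomentum ρ) = ham V ρ := by
  simp [ham, reverseMomentum]

end PhaseSpace

namespace IsHamFlow

variable {n : ℕ} {V : EuclideanSpace ℝ (Fin n) → ℝ} {Φ : ℝ → Phase n → Phase n}
  {K : NNReal} {R t : ℝ} {ρ : Phase n}

theorem hasDerivAt_fst (hΦ : IsHamFlow V Φ) (ρ : Phase n) (t : ℝ) :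
    HasDerivAt (fun s => (Φ s ρ).1) ((2 : ℝ) • (Φ t ρ).2) t :=
  (hΦ.2.2 ρ t).fst

theorem hasDerivAt_snd (hΦ : IsHamFlow V Φ) (ρ : Phase n) (t : ℝ) :
    HasDerivAt (fun s => (Φ s ρ).2) (-gradient V (Φ t ρ).1) t :=
  (hΦ.2.2 ρ t).snd

theorem continuous_apply (hΦ : IsHamFlow V Φ) (hV : LipschitzWith K (gradient V)) (ht : 0 ≤ t) :
    Continuous (Φ t) :=
  continuous_flow_of_lipschitzWith (lipschitzWith_hamVF hV) hΦ.1 hΦ.2.2 ht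

theorem ham_apply (hΦ : IsHamFlow V Φ) (hV : Differentiable ℝ V) (t : ℝ) (ρ : Phase n) :
    ham V (Φ t ρ) = ham V ρ := by
  have hasDerivAt_ham (s : ℝ) : HasDerivAt (fun s => ham V (Φ s ρ)) 0 s := by
    have hasDerivAt_kinetic := (hΦ.hasDerivAt_snd ρ s).norm_sq
    have hasDerivAt_potential :=
      (hV (Φ s ρ).1).hasFDerivAt.comp_hasDerivAt s (hΦ.hasDerivAt_fst ρ s)
    refine (hasDerivAt_kinetic.add hasDerivAt_potential).congr_deriv ?_
    rw [← inner_gradient_left, inner_neg_right, inner_smul_right, real_inner_comm]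
    ring
  simpa only [hΦ.1] using is_const_of_deriv_eq_zero
    (fun s => (hasDerivAt_ham s).differentiableAt) (fun s => (hasDerivAt_ham s).deriv) t 0

theorem apply_eq_of_mem_outgoingRegion (hΦ : IsHamFlow V Φ) (hV : LipschitzWith K (gradient V))
    (hR : ∀ x, R < ‖x‖ → gradient V x = 0) (hρ : ρ ∈ outgoingRegion n R) (ht : 0 ≤ t) :
    Φ t ρ = (ρ.1 + t • (2 : ℝ) • ρ.2, ρ.2) := by
  let line (s : ℝ) : Phase n := (ρ.1 + s • (2 : ℝ) • ρ.2, ρ.2)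
  have gradient_line {s : ℝ} (hs : 0 ≤ s) : gradient V (line s).1 = 0 := by
    refine hR _ (hρ.1.trans_le (norm_le_norm_add_of_inner_nonneg ?_))
    rw [inner_smul_right, inner_smul_right]
    have := hρ.2.le
    positivity
  have hasDerivAt_line (s : ℝ) : HasDerivAt line ((2 : ℝ) • ρ.2, 0) s := by
    simpa only [id, one_smul] using
      (((hasDerivAt_id s).smul_const ((2 : ℝ) • ρ.2)).const_add ρ.1).prodMk
        (hasDerivAt_const s ρ.2)
  have hamVF_line {s : ℝ} (hs : 0 ≤ s) : hamVF V (line s) = ((2 : ℝ) • ρ.2, 0) := by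
    rw [hamVF, gradient_line hs, neg_zero]
  exact ODE_solution_unique (v := fun _ => hamVF V) (fun _ => lipschitzWith_hamVF hV)
    (HasDerivAt.continuousOn fun s _ => hΦ.2.2 ρ s)
    (fun s _ => (hΦ.2.2 ρ s).hasDerivWithinAt)
    (HasDerivAt.continuousOn fun s _ => hasDerivAt_line s)
    (fun s hs => hamVF_line hs.1 ▸ (hasDerivAt_line s).hasDerivWithinAt)
    (by simp [hΦ.1, line]) (right_mem_Icc.2 ht)

theorem tendsto_norm_of_mem_outgoingRegion (hΦ : IsHamFlow V Φ)
    (hV : LipschitzWith K (gradient V)) (hR : ∀ x, R < ‖x‖ → gradient V x = 0)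
    (hρ : ρ ∈ outgoingRegion n R) : Tendsto (fun t => ‖Φ t ρ‖) atTop atTop := by
  have momentum_ne_zero : ρ.2 ≠ 0 := fun h => hρ.2.ne' (by rw [h, inner_zero_right])
  refine tendsto_atTop_mono' _ ?_
    (tendsto_norm_add_smul_atTop ρ.1 (smul_ne_zero (two_ne_zero (α := ℝ)) momentum_ne_zero))
  filter_upwards [eventually_ge_atTop 0] with t ht
  rw [hΦ.apply_eq_of_mem_outgoingRegion hV hR hρ ht]
  exact norm_fst_le (_, _)

theorem tendsto_norm_apply_iff (hΦ : IsHamFlow V Φ) (T : ℝ) (ρ : Phase n) :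
    Tendsto (fun t => ‖Φ t (Φ T ρ)‖) atTop atTop ↔ Tendsto (fun t => ‖Φ t ρ‖) atTop atTop := by
  simp only [← hΦ.2.1]
  have map_add_right : map (fun t : ℝ => t + T) atTop = atTop := (OrderIso.addRight T).map_atTop
  exact (tendsto_map'_iff (f := fun t => ‖Φ t ρ‖)).symm.trans (by rw [map_add_right])

theorem frequently_mem_outgoingRegion (hΦ : IsHamFlow V Φ) (hV : Differentiable ℝ V)
    (hV_bdd : BddBelow (range V)) (R : ℝ)
    (hρ : Tendsto (fun t => ‖Φ t ρ‖) atTop atTop) :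
    ∃ᶠ t in atTop, Φ t ρ ∈ outgoingRegion n R := by
  obtain ⟨m, hm⟩ := hV_bdd
  have momentum_le (t : ℝ) : ‖(Φ t ρ).2‖ ≤ √(ham V ρ - m) :=
    hΦ.ham_apply hV t ρ ▸ norm_snd_le_sqrt_ham_sub (hm (mem_range_self _))
  have position_atTop : Tendsto (fun t => ‖(Φ t ρ).1‖) atTop atTop :=
    tendsto_norm_fst_of_norm_snd_le hρ momentum_le
  have frequently_outward := frequently_inner_deriv_pos (hΦ.hasDerivAt_fst ρ) position_atTop
  refine (frequently_outward.and_eventually (position_atTop.eventually_gt_atTop R)).mono ?_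
  rintro t ⟨outward, far⟩
  rw [inner_smul_right] at outward
  exact ⟨far, pos_of_mul_pos_right outward zero_le_two⟩

theorem tendsto_norm_iff_exists_mem_outgoingRegion (hΦ : IsHamFlow V Φ)
    (hV : Differentiable ℝ V) (hV_lip : LipschitzWith K (gradient V))
    (hV_bdd : BddBelow (range V)) (hR : ∀ x, R < ‖x‖ → gradient V x = 0) (ρ : Phase n) :
    Tendsto (fun t => ‖Φ t ρ‖) atTop atTop ↔ ∃ t, 0 ≤ t ∧ Φ t ρ ∈ outgoingRegion n R := by
  constructor
  · intro hρ
    obtain ⟨t, hmem, ht⟩ := ((hΦ.frequently_mem_outgoingRegion hV hV_bdd R hρ).and_eventually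
      (eventually_ge_atTop 0)).exists
    exact ⟨t, ht, hmem⟩
  · rintro ⟨t, -, hmem⟩
    exact (hΦ.tendsto_norm_apply_iff t ρ).1
      (hΦ.tendsto_norm_of_mem_outgoingRegion hV_lip hR hmem)

theorem isOpen_setOf_tendsto_norm (hΦ : IsHamFlow V Φ) (hV : Differentiable ℝ V)
    (hV_lip : LipschitzWith K (gradient V)) (hV_bdd : BddBelow (range V))
    (hR : ∀ x, R < ‖x‖ → gradient V x = 0) :
    IsOpen {ρ | Tendsto (fun t => ‖Φ t ρ‖) atTop atTop} := by
  have escaping_eq_iUnion : {ρ | Tendsto (fun t => ‖Φ t ρ‖) atTop atTop} =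
      ⋃ t ∈ Ici (0 : ℝ), Φ t ⁻¹' outgoingRegion n R := by
    ext ρ
    simp [hΦ.tendsto_norm_iff_exists_mem_outgoingRegion hV hV_lip hV_bdd hR]
  rw [escaping_eq_iUnion]
  exact isOpen_biUnion fun t ht =>
    (isOpen_outgoingRegion R).preimage (hΦ.continuous_apply hV_lip ht)

theorem isClosed_gammaMinus (hΦ : IsHamFlow V Φ) (hV : Differentiable ℝ V)
    (hV_lip : LipschitzWith K (gradient V)) (hV_bdd : BddBelow (range V))
    (hR : ∀ x, R < ‖x‖ → gradient V x = 0) (E : ℝ) : IsClosed (GammaMinus V Φ E) :=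
  (isClosed_eq (continuous_ham hV.continuous) continuous_const).inter
    (hΦ.isOpen_setOf_tendsto_norm hV hV_lip hV_bdd hR).isClosed_compl

theorem timeReversal (hΦ : IsHamFlow V Φ) :
    IsHamFlow V fun t ρ => reverseMomentum (Φ (-t) (reverseMomentum ρ)) := by
  refine ⟨fun ρ => ?_, fun s t ρ => ?_, fun ρ t => ?_⟩
  · simp only [neg_zero, hΦ.1, reverseMomentum_reverseMomentum]
  · simp only [neg_add, hΦ.2.1, reverseMomentum_reverseMomentum]
  · have hasDerivAt_position :=
      (hΦ.hasDerivAt_fst (reverseMomentum ρ) (-t)).scomp t (hasDerivAt_neg t)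
    have hasDerivAt_momentum :=
      (hΦ.hasDerivAt_snd (reverseMomentum ρ) (-t)).scomp t (hasDerivAt_neg t)
    refine (hasDerivAt_position.prodMk hasDerivAt_momentum.neg).congr_deriv ?_
    simp [hamVF, reverseMomentum]

end IsHamFlow

theorem gammaPlus_eq_preimage_gammaMinus {n : ℕ} (V : EuclideanSpace ℝ (Fin n) → ℝ)
    (Φ : ℝ → Phase n → Phase n) (E : ℝ) :
    GammaPlus V Φ E = reverseMomentum ⁻¹'
      GammaMinus V (fun t ρ => reverseMomentum (Φ (-t) (reverseMomentum ρ))) E := by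
  ext ρ
  simp only [GammaPlus, GammaMinus, mem_preimage, mem_ofPred_eq, ham_reverseMomentum,
    reverseMomentum_reverseMomentum, norm_reverseMomentum]
  rw [← tendsto_comp_neg_atTop_iff]

theorem gamma_closed_general {n : ℕ} {V : EuclideanSpace ℝ (Fin n) → ℝ} {K : NNReal}
    (hV : Differentiable ℝ V) (hV_lip : LipschitzWith K (gradient V))
    (hVsupp : HasCompactSupport V) {Φ : ℝ → Phase n → Phase n} (hΦ : IsHamFlow V Φ) (E : ℝ) :
    IsClosed (GammaMinus V Φ E) ∧ IsClosed (GammaPlus V Φ E) := by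
  obtain ⟨R, hR⟩ := exists_gradient_eq_zero_of_lt_norm hVsupp
  have hV_bdd : BddBelow (range V) := (hVsupp.isCompact_range hV.continuous).bddBelow
  refine ⟨hΦ.isClosed_gammaMinus hV hV_lip hV_bdd hR E, ?_⟩
  rw [gammaPlus_eq_preimage_gammaMinus]
  exact (hΦ.timeReversal.isClosed_gammaMinus hV hV_lip hV_bdd hR E).preimage
    continuous_reverseMomentum

/-- The outgoing and incoming tails are closed. -/
theorem gamma_closed (n : ℕ) (hn : 1 ≤ n)
    (V : EuclideanSpace ℝ (Fin n) → ℝ) (hV : ContDiff ℝ (⊤ : ℕ∞) V)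
    (hVsupp : HasCompactSupport V)
    (Φ : ℝ → Phase n → Phase n) (hΦ : IsHamFlow V Φ)
    (E : ℝ) (hE : 0 < E) :
    IsClosed (GammaMinus V Φ E) ∧ IsClosed (GammaPlus V Φ E) := by
  obtain ⟨K, hK⟩ := exists_lipschitzWith_gradient (hV.of_le (WithTop.coe_le_coe.2 le_top)) hVsupp
  exact gamma_closed_general (hV.differentiable (by simp)) hK hVsupp hΦ E
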